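/- arXiv:2212.08289 — 2 statements merged into one kernel-verified Lean document; each statement's English description precedes it below -/
import Mathlib

section
/- Let μ > 0 and let p : [0,∞) → ℝ^ℕ be a solution of the mean-field ODE system d/dt p_n(t) = 𝓛[p(t)]_n with p(t) ∈ V_μ for all t ≥ 0 and E[p(0) − p*] < ∞. Assume that the series E[p(t) − p*] = ∑_{n≥0} (p_n(t) − p*_n)²/p*_n together with its first and second termwise-differentiated series in t converge uniformly on compact subsets of [0,∞). Then for every t ≥ 0, E[p(t) − p*] ≤ E[p(0) − p*]·e^{−t}; equivalently, the χ² distance χ²(p(t), p*) := ∑_{n≥0} (p_n(t) − p*_n)²/p*_n decays exponentially: χ²(p(t), p*) ≤ χ²(p(0), p*)·e^{−t}. -/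
open Filter

/-- The poor-biased generator: `𝓛[p]_0 = p_1 - μ p_0` and, for `n ≥ 1`,
`𝓛[p]_n = (n+1) p_{n+1} + μ p_{n-1} - (n+μ) p_n`. -/
noncomputable def gen (μ : ℝ) (p : ℕ → ℝ) : ℕ → ℝ
  | 0 => p 1 - μ * p 0
  | n + 1 => ((n : ℝ) + 2) * p (n + 2) + μ * p n - (((n : ℝ) + 1) + μ) * p (n + 1)

/-- `V_μ`: probability mass functions on `ℕ` with mean `μ`. -/
def memV (μ : ℝ) (p : ℕ → ℝ) : Prop :=
  (∀ n, 0 ≤ p n) ∧ (∑' n : ℕ, p n = 1) ∧ (∑' n : ℕ, (n : ℝ) * p n = μ)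

/-- The Poisson distribution with mean `μ`: `p*_n = μ^n e^{-μ} / n!`. -/
noncomputable def pstar (μ : ℝ) (n : ℕ) : ℝ := μ ^ n * Real.exp (-μ) / n.factorial

/-- The series `∑_n f n t` converges uniformly on compact subsets of `[0, ∞)`. -/
def UnifConvOnCompacts (f : ℕ → ℝ → ℝ) : Prop :=
  ∀ K : Set ℝ, K ⊆ Set.Ici 0 → IsCompact K →
    TendstoUniformlyOn (fun (m : ℕ) (t : ℝ) => ∑ n ∈ Finset.range m, f n t)
      (fun t => ∑' n : ℕ, f n t) atTop K

/-!
Write `p(t) = p* + q` and `f = q / p*`, so that `E[q] = ∑ p*_n f_n²`. The generator is a discrete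
divergence, `𝓛[q]_n = J_n - J_{n-1}` with `J_n = μ p*_n (f_{n+1} - f_n)`, and summation by parts
turns the time derivative `2 ∑ f_n 𝓛[q]_n` of the energy into `-2 μ ∑ p*_n (f_{n+1} - f_n)²`.

What remains is the Poincaré inequality of the Poisson distribution. Expand the variance of `f` as
`∑_{i < j} p*_i p*_j (f_j - f_i)²`, apply the Cauchy–Schwarz inequality to
`f_j - f_i = ∑_{i ≤ k < j} (f_{k+1} - f_k)` and interchange the sums. The coefficient of
`(f_{k+1} - f_k)²` becomes `∑_{i ≤ k < j} p*_i p*_j (j - i)`, which equals `μ p*_k` exactly. The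
argument is run on partial sums, where the boundary term of the summation by parts is at most
`n p*_n f_n² / 2` and hence small for infinitely many `n`, because `∑ p*_n f_n²` converges.
-/

open Finset Topology

section WeightedVariance

variable (w f : ℕ → ℝ)

lemma sum_mul_sum_sq_sub_sq_sum (N : ℕ) :
    (∑ n ∈ range N, w n) * (∑ n ∈ range N, w n * f n ^ 2) - (∑ n ∈ range N, w n * f n) ^ 2
      = ∑ j ∈ range N, ∑ i ∈ range j, w i * w j * (f j - f i) ^ 2 := by
  induction N with
  | zero => simp
  | succ N ih =>
    have inner_sum : ∑ i ∈ range N, w i * w N * (f N - f i) ^ 2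
        = w N * (f N ^ 2 * ∑ i ∈ range N, w i - 2 * f N * ∑ i ∈ range N, w i * f i
          + ∑ i ∈ range N, w i * f i ^ 2) := by
      simp only [mul_sum, ← sum_sub_distrib, ← sum_add_distrib]
      exact sum_congr rfl fun i _ => by ring
    simp only [sum_range_succ, inner_sum, ← ih]
    ring

lemma sq_sub_le_mul_sum_sq {i j : ℕ} (hij : i ≤ j) :
    (f j - f i) ^ 2 ≤ ((j : ℝ) - i) * ∑ k ∈ Ico i j, (f (k + 1) - f k) ^ 2 := by
  have cauchy_schwarz :=
    sq_sum_le_card_mul_sum_sq (s := Ico i j) (f := fun k => f (k + 1) - f k)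
  rwa [sum_Ico_sub _ hij, Nat.card_Ico, Nat.cast_sub hij] at cauchy_schwarz

/-- The Stein kernel of the weight `w` on `{0, …, N}`, in the symmetric form
`∑_{i ≤ k < j ≤ N} w_i w_j (j - i)`. When `w` has total mass `1`, this is
`∑_{k < j ≤ N} (j - mean) w_j`, i.e. `w_k` times the usual normalization of the kernel at `k`. -/
def steinKernel (N k : ℕ) : ℝ :=
  ∑ i ∈ range (k + 1), ∑ j ∈ Ico (k + 1) (N + 1), w i * w j * ((j : ℝ) - i)

variable {w}

lemma variance_le_sum_steinKernel (hw : ∀ n, 0 ≤ w n) (N : ℕ) :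
    (∑ n ∈ range (N + 1), w n) * (∑ n ∈ range (N + 1), w n * f n ^ 2)
        - (∑ n ∈ range (N + 1), w n * f n) ^ 2
      ≤ ∑ k ∈ range N, steinKernel w N k * (f (k + 1) - f k) ^ 2 := by
  calc _ = ∑ j ∈ range (N + 1), ∑ i ∈ range j, w i * w j * (f j - f i) ^ 2 :=
        sum_mul_sum_sq_sub_sq_sum w f (N + 1)
    _ ≤ ∑ j ∈ range (N + 1), ∑ i ∈ range j,
          w i * w j * (((j : ℝ) - i) * ∑ k ∈ Ico i j, (f (k + 1) - f k) ^ 2) := by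
        refine sum_le_sum fun j _ => sum_le_sum fun i hi => ?_
        exact mul_le_mul_of_nonneg_left (sq_sub_le_mul_sum_sq f (mem_range.1 hi).le)
          (mul_nonneg (hw i) (hw j))
    _ = ∑ j ∈ range (N + 1), ∑ k ∈ range j, ∑ i ∈ range (k + 1),
          w i * w j * ((j : ℝ) - i) * (f (k + 1) - f k) ^ 2 := by
        simp only [← mul_assoc, mul_sum]
        refine sum_congr rfl fun j _ => sum_comm' fun i k => ?_
        simp only [mem_range, mem_Ico]
        omega
    _ = ∑ k ∈ range N, ∑ j ∈ Ico (k + 1) (N + 1), ∑ i ∈ range (k + 1),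
          w i * w j * ((j : ℝ) - i) * (f (k + 1) - f k) ^ 2 := by
        refine sum_comm' fun j k => ?_
        simp only [mem_range, mem_Ico]
        omega
    _ = ∑ k ∈ range N, steinKernel w N k * (f (k + 1) - f k) ^ 2 := by
        simp only [steinKernel, sum_mul]
        exact sum_congr rfl fun k _ => sum_comm

end WeightedVariance

section Poisson

variable {μ : ℝ}

lemma pstar_pos (hμ : 0 < μ) (n : ℕ) : 0 < pstar μ n := by
  unfold pstar
  positivity

lemma succ_mul_pstar_succ (μ : ℝ) (n : ℕ) :
    ((n : ℝ) + 1) * pstar μ (n + 1) = μ * pstar μ n := by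
  unfold pstar
  rw [Nat.factorial_succ]
  push_cast
  field_simp
  ring

lemma hasSum_pstar (hμ : 0 < μ) : HasSum (pstar μ) 1 := by
  lift μ to NNReal using hμ.le
  refine (ProbabilityTheory.hasSum_one_poissonMeasure μ).congr_fun fun n => ?_
  rw [pstar, mul_comm (Real.exp _)]

lemma sum_range_natCast_mul_pstar (μ : ℝ) (n : ℕ) :
    ∑ i ∈ range (n + 1), (i : ℝ) * pstar μ i = μ * ∑ i ∈ range n, pstar μ i := by
  rw [sum_range_succ', mul_sum]
  simp [succ_mul_pstar_succ]

lemma steinKernel_pstar {N k : ℕ} (hk : k ≤ N) :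
    steinKernel (pstar μ) N k
      = μ * (pstar μ k * ∑ i ∈ range N, pstar μ i - pstar μ N * ∑ i ∈ range k, pstar μ i) := by
  have split_product : steinKernel (pstar μ) N k
      = (∑ i ∈ range (k + 1), pstar μ i) * ∑ j ∈ Ico (k + 1) (N + 1), (j : ℝ) * pstar μ j
        - (∑ i ∈ range (k + 1), (i : ℝ) * pstar μ i) * ∑ j ∈ Ico (k + 1) (N + 1), pstar μ j := by
    simp only [steinKernel, sum_mul_sum, ← sum_sub_distrib]
    exact sum_congr rfl fun i _ => sum_congr rfl fun j _ => by ring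
  rw [split_product]
  simp only [sum_Ico_eq_sub _ (Nat.succ_le_succ hk), sum_range_natCast_mul_pstar]
  simp only [sum_range_succ]
  ring

lemma steinKernel_pstar_le (hμ : 0 < μ) {N k : ℕ} (hk : k ≤ N) :
    steinKernel (pstar μ) N k ≤ μ * pstar μ k := by
  have hnonneg n : 0 ≤ pstar μ n := (pstar_pos hμ n).le
  have mass_le_one : ∑ i ∈ range N, pstar μ i ≤ 1 :=
    sum_le_hasSum _ (fun n _ => hnonneg n) (hasSum_pstar hμ)
  have boundary_nonneg : 0 ≤ pstar μ N * ∑ i ∈ range k, pstar μ i :=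
    mul_nonneg (hnonneg N) (sum_nonneg fun n _ => hnonneg n)
  rw [steinKernel_pstar hk]
  gcongr
  linarith [mul_le_of_le_one_right (hnonneg k) mass_le_one]

lemma poisson_poincare (hμ : 0 < μ) (f : ℕ → ℝ) (N : ℕ) :
    (∑ n ∈ range (N + 1), pstar μ n) * (∑ n ∈ range (N + 1), pstar μ n * f n ^ 2)
        - (∑ n ∈ range (N + 1), pstar μ n * f n) ^ 2
      ≤ ∑ n ∈ range N, μ * pstar μ n * (f (n + 1) - f n) ^ 2 := by
  refine (variance_le_sum_steinKernel f (fun n => (pstar_pos hμ n).le) N).trans ?_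
  gcongr with n hn
  exact steinKernel_pstar_le hμ (mem_range.1 hn).le

end Poisson

lemma nonpos_of_tendsto_of_le_mul_summable {x u : ℕ → ℝ} {l : ℝ} (hu : Summable u)
    (hx : Tendsto x atTop (𝓝 l)) (hle : ∀ n, x (n + 1) ≤ ((n : ℝ) + 1) * u (n + 1)) : l ≤ 0 := by
  by_contra! hl
  have harmonic_le : ∀ᶠ n : ℕ in atTop, ‖1 / ((n : ℝ) + 1)‖ ≤ 2 / l * u (n + 1) := by
    have half_le := (hx.comp (tendsto_add_atTop_nat 1)).eventually_const_le (half_lt_self hl)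
    filter_upwards [half_le] with n hn
    have hn := hn.trans (hle n)
    rw [Real.norm_of_nonneg (by positivity), div_le_iff₀ (by positivity), div_mul_eq_mul_div,
      div_mul_eq_mul_div, le_div_iff₀ hl]
    linarith
  refine Real.not_summable_one_div_natCast ((summable_nat_add_iff 1).1 ?_)
  push_cast
  exact .of_norm_bounded_eventually_nat (((summable_nat_add_iff 1).2 hu).mul_left _) harmonic_le

section Generator

variable {μ : ℝ}

/-- The net flux of `q` from state `n + 1` to state `n` under the poor-biased dynamics, whose
discrete divergence is the generator. -/
def flux (μ : ℝ) (q : ℕ → ℝ) (n : ℕ) : ℝ := ((n : ℝ) + 1) * q (n + 1) - μ * q n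

lemma sum_range_gen (μ : ℝ) (q : ℕ → ℝ) (n : ℕ) :
    ∑ k ∈ range (n + 1), gen μ q k = flux μ q n := by
  induction n with
  | zero => simp [gen, flux]
  | succ n ih =>
    rw [sum_range_succ, ih]
    simp only [gen, flux]
    push_cast
    ring

lemma flux_pstar_mul (μ : ℝ) (f : ℕ → ℝ) (n : ℕ) :
    flux μ (fun k => pstar μ k * f k) n = μ * pstar μ n * (f (n + 1) - f n) := by
  unfold flux
  linear_combination f (n + 1) * succ_mul_pstar_succ μ n

lemma gen_sub_pstar (μ : ℝ) (p : ℕ → ℝ) : gen μ (fun n => p n - pstar μ n) = gen μ p := by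
  funext n
  cases n with
  | zero =>
    have balance := succ_mul_pstar_succ μ 0
    simp only [gen]
    norm_num at balance
    linarith
  | succ n =>
    have balance := succ_mul_pstar_succ μ (n + 1)
    simp only [gen]
    push_cast at balance
    linarith [succ_mul_pstar_succ μ n]

lemma sum_mul_gen_pstar_mul (μ : ℝ) (f : ℕ → ℝ) (N : ℕ) :
    ∑ n ∈ range (N + 1), f n * gen μ (fun k => pstar μ k * f k) n
      = μ * pstar μ N * (f N * (f (N + 1) - f N))
        - ∑ n ∈ range N, μ * pstar μ n * (f (n + 1) - f n) ^ 2 := by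
  have by_parts := sum_range_by_parts f (gen μ fun k => pstar μ k * f k) (N + 1)
  simp only [smul_eq_mul, Nat.add_sub_cancel, sum_range_gen, flux_pstar_mul] at by_parts
  rw [by_parts]
  congr 1
  · ring
  · exact sum_congr rfl fun n _ => by ring

lemma variance_add_sum_mul_gen_le (hμ : 0 < μ) (f : ℕ → ℝ) (N : ℕ) :
    (∑ n ∈ range (N + 1), pstar μ n) * (∑ n ∈ range (N + 1), pstar μ n * f n ^ 2)
        - (∑ n ∈ range (N + 1), pstar μ n * f n) ^ 2
        + ∑ n ∈ range (N + 1), f n * gen μ (fun k => pstar μ k * f k) n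
      ≤ ((N : ℝ) + 1) * (pstar μ (N + 1) * f (N + 1) ^ 2 / 2) := by
  have boundary_le : μ * pstar μ N * (f N * (f (N + 1) - f N))
      ≤ μ * pstar μ N * (f (N + 1) ^ 2 / 2) := by
    refine mul_le_mul_of_nonneg_left ?_ (mul_pos hμ (pstar_pos hμ N)).le
    nlinarith [sq_nonneg (f (N + 1) - f N), sq_nonneg (f N)]
  rw [sum_mul_gen_pstar_mul]
  rw [← succ_mul_pstar_succ] at boundary_le ⊢
  linarith [poisson_poincare hμ f N]

theorem energy_le_neg_of_tendsto (hμ : 0 < μ) {q : ℕ → ℝ} {S : ℝ} (hmass : HasSum q 0)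
    (henergy : Summable fun n => q n ^ 2 / pstar μ n)
    (hS : Tendsto (fun N => ∑ n ∈ range N, q n * gen μ q n / pstar μ n) atTop (𝓝 S)) :
    ∑' n, q n ^ 2 / pstar μ n ≤ -S := by
  have hne n : pstar μ n ≠ 0 := (pstar_pos hμ n).ne'
  obtain ⟨f, rfl⟩ : ∃ f : ℕ → ℝ, q = fun n => pstar μ n * f n :=
    ⟨fun n => q n / pstar μ n, funext fun n => (mul_div_cancel₀ (q n) (hne n)).symm⟩
  have density_sq n : (pstar μ n * f n) ^ 2 / pstar μ n = pstar μ n * f n ^ 2 := by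
    field_simp
  have density_mul n (x : ℝ) : pstar μ n * f n * x / pstar μ n = f n * x := by
    rw [mul_assoc, mul_div_cancel_left₀ _ (hne n)]
  simp only [density_sq, density_mul] at henergy hS ⊢
  have hlim := (((hasSum_pstar hμ).tendsto_sum_nat.mul henergy.hasSum.tendsto_sum_nat).sub
    (hmass.tendsto_sum_nat.pow 2)).add hS
  have := nonpos_of_tendsto_of_le_mul_summable (henergy.div_const 2) hlim
    (variance_add_sum_mul_gen_le hμ f)
  linarith

theorem dissipation_le_neg_two_mul_energy (hμ : 0 < μ) {p : ℕ → ℝ} {D : ℝ} (hmass : HasSum p 1)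
    (henergy : Summable fun n => (p n - pstar μ n) ^ 2 / pstar μ n)
    (hD : Tendsto (fun N => ∑ n ∈ range N, 2 * (p n - pstar μ n) * gen μ p n / pstar μ n)
      atTop (𝓝 D)) :
    D ≤ -2 * ∑' n, (p n - pstar μ n) ^ 2 / pstar μ n := by
  have hmass_sub : HasSum (fun n => p n - pstar μ n) 0 := by
    simpa using hmass.sub (hasSum_pstar hμ)
  have half_dissipation : Tendsto (fun N => ∑ n ∈ range N,
      (p n - pstar μ n) * gen μ (fun k => p k - pstar μ k) n / pstar μ n) atTop (𝓝 (D / 2)) := by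
    refine (hD.div_const 2).congr fun N => ?_
    rw [gen_sub_pstar, sum_div]
    exact sum_congr rfl fun n _ => by ring
  linarith [energy_le_neg_of_tendsto hμ hmass_sub henergy half_dissipation]

end Generator

lemma memV.hasSum {μ : ℝ} {p : ℕ → ℝ} (hp : memV μ p) : HasSum p 1 := by
  have hsummable : Summable p := by
    by_contra h
    exact zero_ne_one ((tsum_eq_zero_of_not_summable h).symm.trans hp.2.1)
  exact hp.2.1 ▸ hsummable.hasSum

namespace UnifConvOnCompacts

variable {u u' : ℕ → ℝ → ℝ}

lemma tendsto_sum_range (hu : UnifConvOnCompacts u) {t : ℝ} (ht : t ∈ Set.Ici (0 : ℝ)) :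
    Tendsto (fun N => ∑ n ∈ range N, u n t) atTop (𝓝 (∑' n, u n t)) :=
  (hu {t} (Set.singleton_subset_iff.2 ht) isCompact_singleton).tendsto_at rfl

lemma summable_of_nonneg (hu : UnifConvOnCompacts u) {t : ℝ} (ht : t ∈ Set.Ici (0 : ℝ))
    (hnonneg : ∀ n, 0 ≤ u n t) : Summable fun n => u n t :=
  ((hasSum_iff_tendsto_nat_of_nonneg hnonneg _).2 (hu.tendsto_sum_range ht)).summable

lemma tendstoLocallyUniformlyOn (hu : UnifConvOnCompacts u) :
    TendstoLocallyUniformlyOn (fun (N : ℕ) t => ∑ n ∈ range N, u n t) (fun t => ∑' n, u n t)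
      atTop (Set.Ici 0) := by
  refine tendstoLocallyUniformlyOn_of_forall_exists_nhds fun t _ =>
    ⟨Set.Icc 0 (t + 1), ?_, hu _ Set.Icc_subset_Ici_self isCompact_Icc⟩
  rw [← Set.Ici_inter_Iic]
  exact inter_mem_nhdsWithin _ (Iic_mem_nhds (lt_add_one t))

lemma continuousOn_tsum (hu : UnifConvOnCompacts u)
    (hcont : ∀ n, ContinuousOn (u n) (Set.Ici 0)) :
    ContinuousOn (fun t => ∑' n, u n t) (Set.Ici 0) :=
  hu.tendstoLocallyUniformlyOn.continuousOn
    (.of_forall fun N => continuousOn_finsetSum (range N) fun n _ => hcont n)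

lemma hasDerivAt_tsum (hu : UnifConvOnCompacts u) (hu' : UnifConvOnCompacts u')
    (hderiv : ∀ n, ∀ t ∈ Set.Ioi (0 : ℝ), HasDerivAt (u n) (u' n t) t)
    {t : ℝ} (ht : t ∈ Set.Ioi (0 : ℝ)) :
    HasDerivAt (fun s => ∑' n, u n s) (∑' n, u' n t) t :=
  hasDerivAt_of_tendstoLocallyUniformlyOn (f' := fun N s => ∑ n ∈ range N, u' n s) isOpen_Ioi
    (hu'.tendstoLocallyUniformlyOn.mono Set.Ioi_subset_Ici_self)
    (.of_forall fun _ s hs => HasDerivAt.fun_sum fun n _ => hderiv n s hs)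
    (fun _ hs => hu.tendsto_sum_range (Set.Ioi_subset_Ici_self hs)) ht

end UnifConvOnCompacts

lemma le_mul_exp_of_hasDerivAt_le {E E' : ℝ → ℝ} {a c : ℝ} (hcont : ContinuousOn E (Set.Ici a))
    (hderiv : ∀ t ∈ Set.Ioi a, HasDerivAt E (E' t) t) (hle : ∀ t ∈ Set.Ioi a, E' t ≤ c * E t)
    {t : ℝ} (ht : t ∈ Set.Ici a) : E t ≤ E a * Real.exp (c * (t - a)) := by
  have hprod : ∀ s ∈ Set.Ioi a, HasDerivAt (fun s => E s * Real.exp (-(c * (s - a))))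
      ((E' s - c * E s) * Real.exp (-(c * (s - a)))) s := by
    intro s hs
    have hexp : HasDerivAt (fun s => Real.exp (-(c * (s - a))))
        (Real.exp (-(c * (s - a))) * -(c * 1)) s :=
      (((hasDerivAt_id s).sub_const a).const_mul c).neg.exp
    exact ((hderiv s hs).mul hexp).congr_deriv (by ring)
  have hanti : AntitoneOn (fun s => E s * Real.exp (-(c * (s - a)))) (Set.Ici a) := by
    refine antitoneOn_of_hasDerivWithinAt_nonpos
      (f' := fun s => (E' s - c * E s) * Real.exp (-(c * (s - a)))) (convex_Ici a)
      (hcont.mul (by fun_prop)) ?_ ?_ <;> rw [interior_Ici]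
    · exact fun s hs => (hprod s hs).hasDerivWithinAt
    · exact fun s hs =>
        mul_nonpos_of_nonpos_of_nonneg (sub_nonpos.2 (hle s hs)) (Real.exp_pos _).le
  have h := hanti Set.self_mem_Ici ht ht
  beta_reduce at h
  rwa [sub_self, mul_zero, neg_zero, Real.exp_zero, mul_one, Real.exp_neg, ← div_eq_mul_inv,
    div_le_iff₀ (Real.exp_pos _)] at h

theorem chi2_exponential_decay_general {μ : ℝ} (hμ : 0 < μ) {p : ℝ → ℕ → ℝ}
    (hode : ∀ t ∈ Set.Ici (0 : ℝ), ∀ n : ℕ,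
      HasDerivWithinAt (fun s => p s n) (gen μ (p t) n) (Set.Ici 0) t)
    (hmass : ∀ t ∈ Set.Ici (0 : ℝ), HasSum (p t) 1)
    (hunifE : UnifConvOnCompacts (fun n t => (p t n - pstar μ n) ^ 2 / pstar μ n))
    (hunifE' : UnifConvOnCompacts
      (fun n t => 2 * (p t n - pstar μ n) * gen μ (p t) n / pstar μ n))
    {t : ℝ} (ht : t ∈ Set.Ici (0 : ℝ)) :
    ∑' n : ℕ, (p t n - pstar μ n) ^ 2 / pstar μ n
      ≤ (∑' n : ℕ, (p 0 n - pstar μ n) ^ 2 / pstar μ n) * Real.exp (-2 * t) := by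
  have term_deriv n s (hs : s ∈ Set.Ici (0 : ℝ)) :
      HasDerivWithinAt (fun s => (p s n - pstar μ n) ^ 2 / pstar μ n)
        (2 * (p s n - pstar μ n) * gen μ (p s) n / pstar μ n) (Set.Ici 0) s := by
    simpa using (((hode s hs n).sub_const (pstar μ n)).fun_pow 2).div_const (pstar μ n)
  have dissipation_le s (hs : s ∈ Set.Ici (0 : ℝ)) :
      ∑' n, 2 * (p s n - pstar μ n) * gen μ (p s) n / pstar μ n
        ≤ -2 * ∑' n, (p s n - pstar μ n) ^ 2 / pstar μ n :=
    dissipation_le_neg_two_mul_energy hμ (hmass s hs)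
      (hunifE.summable_of_nonneg hs fun n => div_nonneg (sq_nonneg _) (pstar_pos hμ n).le)
      (hunifE'.tendsto_sum_range hs)
  simpa only [sub_zero] using le_mul_exp_of_hasDerivAt_le
    (hunifE.continuousOn_tsum fun n s hs => (term_deriv n s hs).continuousWithinAt)
    (fun s hs => hunifE.hasDerivAt_tsum hunifE' (fun n r hr =>
      (term_deriv n r (Set.Ioi_subset_Ici_self hr)).hasDerivAt (Ici_mem_nhds hr)) hs)
    (fun s hs => dissipation_le s (Set.Ioi_subset_Ici_self hs)) ht

/-- Exponential decay of the χ² distance (equivalently, of the energy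
`E[p(t) - p*] = ∑_n (p_n(t) - p*_n)² / p*_n`):
`E[p(t) - p*] ≤ E[p(0) - p*] e^{-t}` for all `t ≥ 0`. -/
theorem chi2_exponential_decay (μ : ℝ) (hμ : 0 < μ) (p : ℝ → ℕ → ℝ)
    (hode : ∀ t ∈ Set.Ici (0 : ℝ), ∀ n : ℕ,
      HasDerivWithinAt (fun s => p s n) (gen μ (p t) n) (Set.Ici 0) t)
    (hV : ∀ t ∈ Set.Ici (0 : ℝ), memV μ (p t))
    (hE0 : Summable (fun n : ℕ => (p 0 n - pstar μ n) ^ 2 / pstar μ n))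
    (hunifE : UnifConvOnCompacts (fun n t => (p t n - pstar μ n) ^ 2 / pstar μ n))
    (hunifE' : UnifConvOnCompacts
      (fun n t => 2 * (p t n - pstar μ n) * gen μ (p t) n / pstar μ n))
    (hunifE'' : UnifConvOnCompacts
      (fun n t => 2 * ((gen μ (p t) n) ^ 2 + (p t n - pstar μ n) * gen μ (gen μ (p t)) n)
        / pstar μ n)) :
    ∀ t ∈ Set.Ici (0 : ℝ),
      ∑' n : ℕ, (p t n - pstar μ n) ^ 2 / pstar μ n
        ≤ (∑' n : ℕ, (p 0 n - pstar μ n) ^ 2 / pstar μ n) * Real.exp (-t) := by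
  intro t ht
  refine (chi2_exponential_decay_general hμ hode (fun s hs => (hV s hs).hasSum) hunifE hunifE'
    ht).trans ?_
  gcongr
  · exact tsum_nonneg fun n => div_nonneg (sq_nonneg _) (pstar_pos hμ n).le
  · linarith [Set.mem_Ici.1 ht]
end

section
/- Fix integers N ≥ 2, μ ≥ 1 and 1 ≤ k ≤ N. Let P : [0,∞) → probability measures on ℕ^N be a solution of the poor-biased master equation whose initial condition P_0 is supported on 𝒜_{N,μ} and is exchangeable (invariant under permutations of the N coordinates). Then for every t ≥ 0, W₁(π_k(P_t), M_{N,k}) ≤ 2·μ·e^{−t}, where π_k denotes the k-particle marginal (pushforward under (S_1,…,S_N) ↦ (S_1,…,S_k)), M_{N,k} := π_k(M_N), and W₁ is the normalized Wasserstein-1 distance on ℕ^k. -/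
open MeasureTheory ENNReal

noncomputable section

/-- The configuration obtained from `S` by adding a dollar to agent `i` and removing
one from agent `j`, i.e. `S + e_i - e_j`. -/
def moveDollar {N : ℕ} (S : Fin N → ℕ) (i j : Fin N) : Fin N → ℕ :=
  Function.update (Function.update S i (S i + 1)) j (S j - 1)

/-- The right-hand side of the poor-biased master equation at configuration `S`:
`∑_{i ≠ j} [((S_i+1)/N) P(S + e_i - e_j) 1_{S_j ≥ 1} - (S_i/N) P(S)]`. -/
def masterRHS {N : ℕ} (P : Measure (Fin N → ℕ)) (S : Fin N → ℕ) : ℝ :=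
  ∑ i : Fin N, ∑ j : Fin N,
    if i ≠ j then
      (((S i : ℝ) + 1) / N) * (P {moveDollar S i j}).toReal * (if 1 ≤ S j then 1 else 0)
        - ((S i : ℝ) / N) * (P {S}).toReal
    else 0

/-- A solution of the poor-biased master equation on `[0, ∞)`: a family of probability
measures on `ℕ^N` whose point masses are differentiable in time with derivative given
by the master equation. -/
def IsMasterSolution {N : ℕ} (P : ℝ → Measure (Fin N → ℕ)) : Prop :=
  (∀ t ∈ Set.Ici (0 : ℝ), IsProbabilityMeasure (P t)) ∧
    ∀ S : Fin N → ℕ, ∀ t ∈ Set.Ici (0 : ℝ),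
      HasDerivWithinAt (fun s => ((P s) {S}).toReal) (masterRHS (P t) S) (Set.Ici 0) t

/-- The normalized Wasserstein-1 distance (valued in `ℝ≥0∞`) between two measures on
`ℕ^d`: the infimum over couplings of the expected normalized `ℓ¹` distance. -/
def W1 (d : ℕ) (π₁ π₂ : Measure (Fin d → ℕ)) : ℝ≥0∞ :=
  ⨅ (π : Measure ((Fin d → ℕ) × (Fin d → ℕ))) (_ : π.map Prod.fst = π₁)
      (_ : π.map Prod.snd = π₂),
    ∫⁻ z, (∑ j : Fin d, (Nat.dist (z.1 j) (z.2 j) : ℝ≥0∞)) / (d : ℝ≥0∞) ∂π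

/-- The multinomial distribution `M_N` on `𝒜_{N,μ}` (extended by `0` to `ℕ^N`):
`M_N(S) = ((Nμ)! / (S_1! ⋯ S_N!)) N^{-Nμ}` when `∑_i S_i = Nμ`. -/
def MNmeas (N μ : ℕ) : Measure (Fin N → ℕ) :=
  Measure.sum (fun S : Fin N → ℕ =>
    (if ∑ i, S i = N * μ then
        ENNReal.ofReal (((N * μ).factorial : ℝ) / ((∏ i, (S i).factorial : ℕ) * (N : ℝ) ^ (N * μ)))
      else 0) • Measure.dirac S)

/-- The `k`-particle marginal of a measure on `ℕ^N`: the pushforward under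
`(S_1, …, S_N) ↦ (S_1, …, S_k)`. -/
def marginal {N : ℕ} (k : ℕ) (h : k ≤ N) (π : Measure (Fin N → ℕ)) :
    Measure (Fin k → ℕ) :=
  π.map (fun S => fun i : Fin k => S (Fin.castLE h i))

/-!
Label the dollars. At rate `1` each dollar, independently of the others, is handed to a uniformly
chosen agent; the occupation numbers of this process solve the master equation, whose solution is
unique. A dollar that has rung at least once sits at a uniform agent, so at time `t` it may be
taken to sit at the target of its first ring, whereas the targets of all dollars have multinomial
occupation numbers. In this coupling only the dollars that have not rung by time `t`, a fraction
`exp (-t)` in expectation, contribute to the distance, each at its initial holder and at its target.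
-/

open scoped Finset

section Occupation

variable {ι α : Type*} [Fintype ι] [DecidableEq α]

/-- The occupation numbers of a labelled configuration: if dollar `m` sits at agent `c m`, then
`occupation c a` is the fortune of agent `a`. -/
def occupation (c : ι → α) (a : α) : ℕ := #{m | c m = a}

lemma sum_occupation [Fintype α] (c : ι → α) : ∑ a, occupation c a = Fintype.card ι :=
  (Finset.card_eq_sum_card_fiberwise fun _ _ => Finset.mem_univ _).symm

lemma sum_comp_eq_sum_occupation_mul [Fintype α] {R : Type*} [NonAssocSemiring R]
    (c : ι → α) (g : α → R) : ∑ m, g (c m) = ∑ a, occupation c a * g a := by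
  rw [← Finset.sum_fiberwise' Finset.univ c g]
  simp only [Finset.sum_const, nsmul_eq_mul, occupation]

lemma sum_X_pow_card_eq_sum_monomial_occupation [Fintype α] [DecidableEq ι]
    (R : Type*) [CommSemiring R] :
    (∑ a, MvPolynomial.X a : MvPolynomial α R) ^ Fintype.card ι
      = ∑ c : ι → α, MvPolynomial.monomial (Finsupp.equivFunOnFinite.symm (occupation c)) 1 := by
  have monomial_occupation (c : ι → α) :
      MvPolynomial.monomial (Finsupp.equivFunOnFinite.symm (occupation c)) (1 : R)
        = ∏ m, MvPolynomial.X (c m) := by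
    have : Finsupp.equivFunOnFinite.symm (occupation c) = ∑ m, Finsupp.single (c m) 1 := by
      ext a
      simp [occupation, Finsupp.finsetSum_apply, Finsupp.single_apply]
    rw [this, MvPolynomial.monomial_sum_one]
    rfl
  simp_rw [monomial_occupation, ← Fintype.prod_sum fun (_ : ι) (a : α) =>
    (MvPolynomial.X a : MvPolynomial α R), Finset.prod_const, Finset.card_univ]

lemma card_occupation_eq [Fintype α] [DecidableEq ι] {S : α → ℕ}
    (hS : ∑ a, S a = Fintype.card ι) :
    #{c : ι → α | occupation c = S} = Nat.multinomial Finset.univ S := by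
  have coeff_eq := MvPolynomial.coeff_sum_X_pow_of_fintype (R := ℕ)
    (Finsupp.equivFunOnFinite.symm S) (Fintype.card ι)
  have degree_eq : ((Finsupp.equivFunOnFinite.symm S).sum fun _ m => m) = Fintype.card ι := by
    simpa [Finsupp.sum_fintype] using hS
  rw [sum_X_pow_card_eq_sum_monomial_occupation, if_pos degree_eq,
    ← Finsupp.multinomial_of_support_subset (Finset.subset_univ _)] at coeff_eq
  simpa [MvPolynomial.coeff_sum, MvPolynomial.coeff_monomial] using coeff_eq

lemma mem_range_occupation [Fintype α] {S : α → ℕ} (hS : ∑ a, S a = Fintype.card ι) :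
    S ∈ Set.range (occupation : (ι → α) → α → ℕ) := by
  classical
  have : 0 < #{c : ι → α | occupation c = S} := by
    rw [card_occupation_eq hS]
    exact Nat.multinomial_pos _ _
  obtain ⟨c, hc⟩ := Finset.card_pos.mp this
  exact ⟨c, (Finset.mem_filter.mp hc).2⟩

lemma occupation_update_add [DecidableEq ι] (c : ι → α) (m : ι) (b a : α) :
    occupation (Function.update c m b) a + (if c m = a then 1 else 0)
      = occupation c a + (if b = a then 1 else 0) := by
  have off_m : ∑ l ∈ Finset.univ.erase m, (if Function.update c m b l = a then 1 else 0)
      = ∑ l ∈ Finset.univ.erase m, if c l = a then 1 else 0 :=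
    Finset.sum_congr rfl fun l hl => by rw [Function.update_of_ne (Finset.ne_of_mem_erase hl)]
  simp only [occupation, Finset.card_filter]
  rw [← Finset.add_sum_erase Finset.univ _ (Finset.mem_univ m),
    ← Finset.add_sum_erase Finset.univ (fun l => if c l = a then 1 else 0) (Finset.mem_univ m),
    off_m, Function.update_self]
  omega

end Occupation

section MasterOperator

variable {N : ℕ}

lemma moveDollar_eq_iff {S T : Fin N → ℕ} {i j : Fin N} (hij : i ≠ j) (hT : 1 ≤ T i) :
    moveDollar T j i = S ↔ 1 ≤ S j ∧ T = moveDollar S i j := by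
  simp only [moveDollar, funext_iff, Function.update_apply]
  grind

lemma sum_moveDollar {S : Fin N → ℕ} {i j : Fin N} (hij : i ≠ j) (hj : 1 ≤ S j) :
    ∑ l, moveDollar S i j l = ∑ l, S l := by
  simp only [moveDollar]
  rw [Finset.sum_update_of_mem (Finset.mem_univ j), Finset.sum_update_of_mem (by simpa using hij),
    ← Finset.add_sum_erase Finset.univ S (Finset.mem_univ j),
    ← Finset.add_sum_erase (Finset.univ.erase j) S (a := i) (by simpa using hij)]
  simp only [Finset.sdiff_singleton_eq_erase]
  omega

lemma occupation_update {ι : Type*} [Fintype ι] [DecidableEq ι] (c : ι → Fin N) {m : ι}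
    {b : Fin N} (hb : c m ≠ b) :
    occupation (Function.update c m b) = moveDollar (occupation c) b (c m) := by
  ext a
  have := occupation_update_add c m b a
  simp only [moveDollar, Function.update_apply]
  grind

/-- The right-hand side of the master equation as a linear operator on functions of the
configuration; `masterRHS` is its value at the function of point masses. -/
def masterOperator (N : ℕ) : ((Fin N → ℕ) → ℝ) →ₗ[ℝ] ((Fin N → ℕ) → ℝ) where
  toFun p S := ∑ i : Fin N, ∑ j : Fin N,
    if i ≠ j then
      (((S i : ℝ) + 1) / N) * p (moveDollar S i j) * (if 1 ≤ S j then 1 else 0)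
        - ((S i : ℝ) / N) * p S
    else 0
  map_add' p q := by
    ext S
    simp only [Pi.add_apply, ← Finset.sum_add_distrib]
    refine Finset.sum_congr rfl fun i _ => Finset.sum_congr rfl fun j _ => ?_
    split_ifs <;> ring
  map_smul' a p := by
    ext S
    simp only [Pi.smul_apply, smul_eq_mul, RingHom.id_apply, Finset.mul_sum]
    refine Finset.sum_congr rfl fun i _ => Finset.sum_congr rfl fun j _ => ?_
    split_ifs <;> ring

lemma masterRHS_eq_masterOperator (P : Measure (Fin N → ℕ)) :
    masterRHS P = masterOperator N fun S => P.real {S} := rfl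

lemma masterOperator_eq_zero_of_eq_zero {n : ℕ} {p : (Fin N → ℕ) → ℝ}
    (hp : ∀ S, ∑ i, S i = n → p S = 0) {S : Fin N → ℕ} (hS : ∑ i, S i = n) :
    masterOperator N p S = 0 := by
  simp only [masterOperator, LinearMap.coe_mk, AddHom.coe_mk, hp S hS]
  refine Finset.sum_eq_zero fun i _ => Finset.sum_eq_zero fun j _ => ?_
  split_ifs with hij hj
  · rw [hp _ ((sum_moveDollar hij hj).trans hS), mul_zero, mul_zero, zero_mul, sub_zero]
  · simp only [mul_zero, sub_zero]
  · rfl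

end MasterOperator

section Uniqueness

lemma eqOn_of_hasDerivWithinAt_linearMap {X : Type*} {s : Finset X}
    (L : (X → ℝ) →ₗ[ℝ] (X → ℝ)) (hL : ∀ p : X → ℝ, Set.EqOn p 0 s → Set.EqOn (L p) 0 s)
    {f g : ℝ → X → ℝ}
    (hf : ∀ x ∈ s, ∀ t ∈ Set.Ici (0 : ℝ),
      HasDerivWithinAt (fun r => f r x) (L (f t) x) (Set.Ici 0) t)
    (hg : ∀ x ∈ s, ∀ t ∈ Set.Ici (0 : ℝ),
      HasDerivWithinAt (fun r => g r x) (L (g t) x) (Set.Ici 0) t)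
    (h_zero : Set.EqOn (f 0) (g 0) s) {t : ℝ} (ht : 0 ≤ t) : Set.EqOn (f t) (g t) s := by
  let restrict : (X → ℝ) →ₗ[ℝ] (s → ℝ) := LinearMap.funLeft ℝ ℝ Subtype.val
  let extend : (s → ℝ) →ₗ[ℝ] (X → ℝ) := Function.ExtendByZero.linearMap ℝ Subtype.val
  let A : (s → ℝ) →L[ℝ] (s → ℝ) := (restrict ∘ₗ L ∘ₗ extend).toContinuousLinearMap
  have A_restrict (p : X → ℝ) : A (restrict p) = restrict (L p) := by
    ext x
    have extend_restrict : Set.EqOn (p - extend (restrict p)) 0 s := fun y hy =>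
      sub_eq_zero.mpr (Subtype.val_injective.extend_apply (restrict p) 0 ⟨y, hy⟩).symm
    have := hL _ extend_restrict x.2
    rw [map_sub, Pi.sub_apply, Pi.zero_apply, sub_eq_zero] at this
    exact this.symm
  have hasDeriv {h : ℝ → X → ℝ} (hh : ∀ x ∈ s, ∀ t ∈ Set.Ici (0 : ℝ),
      HasDerivWithinAt (fun r => h r x) (L (h t) x) (Set.Ici 0) t) (r : ℝ) (hr : 0 ≤ r) :
      HasDerivWithinAt (fun r => restrict (h r)) (A (restrict (h r))) (Set.Ici 0) r := by
    rw [A_restrict, hasDerivWithinAt_pi]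
    exact fun x => hh x x.2 r hr
  have restrict_eq : Set.EqOn (fun r => restrict (f r)) (fun r => restrict (g r)) (Set.Icc 0 t) :=
    ODE_solution_unique (v := fun _ => A) (fun _ => A.lipschitz)
      (fun r hr => (hasDeriv hf r hr.1).continuousWithinAt.mono Set.Icc_subset_Ici_self)
      (fun r hr => (hasDeriv hf r hr.1).mono (Set.Ici_subset_Ici.2 hr.1))
      (fun r hr => (hasDeriv hg r hr.1).continuousWithinAt.mono Set.Icc_subset_Ici_self)
      (fun r hr => (hasDeriv hg r hr.1).mono (Set.Ici_subset_Ici.2 hr.1))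
      (funext fun x => h_zero x.2)
  exact fun x hx => congrFun (restrict_eq (Set.right_mem_Icc.2 ht)) ⟨x, hx⟩

-- The equation conserves the total amount of money, so it decouples into finite linear systems.
lemma IsMasterSolution.eq_of_zero_eq {N : ℕ} {P Q : ℝ → Measure (Fin N → ℕ)}
    (hP : IsMasterSolution P) (hQ : IsMasterSolution Q) (h_zero : P 0 = Q 0) {t : ℝ} (ht : 0 ≤ t) :
    P t = Q t := by
  have := hP.1 t ht
  have := hQ.1 t ht
  refine Measure.ext_of_singleton fun S => (ENNReal.toReal_eq_toReal_iff' (measure_ne_top _ _)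
    (measure_ne_top _ _)).mp ?_
  have mem_level {T : Fin N → ℕ} :
      T ∈ Finset.piAntidiag Finset.univ (∑ i, S i) ↔ ∑ i, T i = ∑ i, S i := by
    simp
  exact eqOn_of_hasDerivWithinAt_linearMap (masterOperator N)
    (fun p hp T hT => masterOperator_eq_zero_of_eq_zero
      (fun T' hT' => hp (mem_level.mpr hT')) (mem_level.mp hT))
    (fun T _ => hP.2 T) (fun T _ => hQ.2 T)
    (fun T _ => by rw [h_zero]) ht (mem_level.mpr rfl)

end Uniqueness

section ResamplingGenerator

variable {ι α : Type*} [Fintype ι] [DecidableEq ι] [Fintype α]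

/-- The generator of independent labelled dollars, each of which is handed at rate `1` to a
uniformly chosen agent. Its matrix is symmetric, so it governs the forward equation as well. -/
def resamplingGenerator (ι α : Type*) [Fintype ι] [DecidableEq ι] [Fintype α] :
    ((ι → α) → ℝ) →ₗ[ℝ] ((ι → α) → ℝ) :=
  ∑ m, ∑ a, (Fintype.card α : ℝ)⁻¹ •
    (LinearMap.funLeft ℝ ℝ (fun c => Function.update c m a) - LinearMap.id)

lemma resamplingGenerator_apply (p : (ι → α) → ℝ) (c : ι → α) :
    resamplingGenerator ι α p c
      = ∑ m, ∑ a, (Fintype.card α : ℝ)⁻¹ * (p (Function.update c m a) - p c) := by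
  simp [resamplingGenerator, LinearMap.sum_apply, LinearMap.funLeft_apply]

lemma sum_mul_update_comm (m : ι) (f p : (ι → α) → ℝ) :
    ∑ c, ∑ a, f c * p (Function.update c m a) = ∑ c, ∑ a, f (Function.update c m a) * p c := by
  rw [← Fintype.sum_prod_type', ← Fintype.sum_prod_type']
  refine Finset.sum_nbij' (fun x => (Function.update x.1 m x.2, x.1 m))
    (fun x => (Function.update x.1 m x.2, x.1 m)) ?_ ?_ ?_ ?_ ?_ <;> simp

lemma sum_mul_resamplingGenerator_comm (f p : (ι → α) → ℝ) :
    ∑ c, f c * resamplingGenerator ι α p c = ∑ c, resamplingGenerator ι α f c * p c := by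
  simp_rw [resamplingGenerator_apply, Finset.mul_sum, Finset.sum_mul]
  refine (Finset.sum_comm.trans (Finset.sum_congr rfl fun m _ => ?_)).trans Finset.sum_comm
  simp only [mul_assoc, mul_left_comm (f _), ← Finset.mul_sum (a := (Fintype.card α : ℝ)⁻¹),
    mul_sub, sub_mul, Finset.sum_sub_distrib, sum_mul_update_comm]

variable {N : ℕ}

lemma resamplingGenerator_ite_occupation_eq (c : ι → Fin N) (S : Fin N → ℕ) :
    resamplingGenerator ι (Fin N) (fun d => if occupation d = S then 1 else 0) c
      = masterOperator N (Pi.single (occupation c) 1) S := by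
  have gain {i j : Fin N} (hij : i ≠ j) :
      (occupation c i : ℝ) * (if 1 ≤ S j ∧ occupation c = moveDollar S i j then 1 else 0)
        = ((S i : ℝ) + 1) * Pi.single (M := fun _ => ℝ) (occupation c) 1 (moveDollar S i j)
          * (if 1 ≤ S j then 1 else 0) := by
    by_cases h : occupation c = moveDollar S i j
    · have : occupation c i = S i + 1 := by simp [h, moveDollar, hij]
      simp [this, ← h]
    · simp [h]
  have loss (i : Fin N) : (occupation c i : ℝ) * (if occupation c = S then 1 else 0)
      = S i * Pi.single (M := fun _ => ℝ) (occupation c) 1 S := by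
    by_cases h : occupation c = S <;> simp [h]
  have jump_from (m : ι) (j : Fin N) :
      (N : ℝ)⁻¹ * ((if occupation (Function.update c m j) = S then 1 else 0)
          - (if occupation c = S then 1 else 0))
        = if c m ≠ j then (N : ℝ)⁻¹ * ((if 1 ≤ S j ∧ occupation c = moveDollar S (c m) j then 1
            else 0) - (if occupation c = S then 1 else 0)) else 0 := by
    rcases eq_or_ne (c m) j with rfl | hj
    · simp
    · have : 1 ≤ occupation c (c m) := Finset.card_pos.mpr ⟨m, by simp⟩
      simp only [occupation_update c hj, moveDollar_eq_iff hj this, if_pos hj]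
  simp_rw [resamplingGenerator_apply, Fintype.card_fin, jump_from]
  rw [sum_comp_eq_sum_occupation_mul c fun i => ∑ j, if i ≠ j then (N : ℝ)⁻¹ *
    ((if 1 ≤ S j ∧ occupation c = moveDollar S i j then 1 else 0)
      - (if occupation c = S then 1 else 0)) else 0]
  simp_rw [Finset.mul_sum, mul_ite, mul_zero]
  refine Finset.sum_congr rfl fun i _ => Finset.sum_congr rfl fun j _ =>
    ite_congr rfl (fun hij => ?_) fun _ => rfl
  linear_combination (N : ℝ)⁻¹ * gain hij - (N : ℝ)⁻¹ * loss i

lemma masterOperator_sum_fiber_occupation (p : (ι → Fin N) → ℝ) (S : Fin N → ℕ) :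
    masterOperator N (fun T => ∑ c with occupation c = T, p c) S
      = ∑ c with occupation c = S, resamplingGenerator ι (Fin N) p c := by
  have as_combination : (fun T => ∑ c with occupation c = T, p c)
      = ∑ c, p c • (Pi.single (occupation c) 1 : (Fin N → ℕ) → ℝ) := by
    ext T
    simp [Finset.sum_filter, Pi.single_apply, eq_comm]
  calc masterOperator N (fun T => ∑ c with occupation c = T, p c) S
      = ∑ c, resamplingGenerator ι (Fin N) (fun d => if occupation d = S then 1 else 0) c
          * p c := by
        simp [as_combination, resamplingGenerator_ite_occupation_eq, mul_comm]
    _ = ∑ c, (if occupation c = S then 1 else 0) * resamplingGenerator ι (Fin N) p c :=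
        (sum_mul_resamplingGenerator_comm _ _).symm
    _ = ∑ c with occupation c = S, resamplingGenerator ι (Fin N) p c := by
        simp [Finset.sum_filter]

end ResamplingGenerator

section ResamplingProb

variable {ι α : Type*} [Fintype α] [DecidableEq α]

/-- The transition probability `a → b` in time `t` of a dollar that is handed at rate `1` to a
uniformly chosen agent. -/
def resamplingProb (t : ℝ) (a b : α) : ℝ :=
  Real.exp (-t) * (if a = b then 1 else 0) + (1 - Real.exp (-t)) * (Fintype.card α : ℝ)⁻¹

lemma hasDerivAt_resamplingProb (a b : α) (t : ℝ) :
    HasDerivAt (fun s => resamplingProb s a b)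
      ((Fintype.card α : ℝ)⁻¹ - resamplingProb t a b) t := by
  have exp_neg : HasDerivAt (fun s : ℝ => Real.exp (-s)) (-Real.exp (-t)) t := by
    simpa using (hasDerivAt_neg t).exp
  convert! (exp_neg.mul_const (if a = b then (1 : ℝ) else 0)).add
    ((exp_neg.const_sub 1).mul_const (Fintype.card α : ℝ)⁻¹) using 1
  unfold resamplingProb
  ring

lemma sum_resamplingProb [Nonempty α] (t : ℝ) (a : α) : ∑ b, resamplingProb t a b = 1 := by
  simp [resamplingProb, Finset.sum_add_distrib]
  field_simp
  ring

lemma hasDerivAt_prod_resamplingProb [Fintype ι] [DecidableEq ι] [Nonempty α] (c d : ι → α)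
    (t : ℝ) :
    HasDerivAt (fun s => ∏ m, resamplingProb s (c m) (d m))
      (resamplingGenerator ι α (fun e => ∏ m, resamplingProb t (c m) (e m)) d) t := by
  have prod_update (m : ι) (b : α) :
      ∏ l, resamplingProb t (c l) (Function.update d m b l)
        = (∏ l ∈ Finset.univ.erase m, resamplingProb t (c l) (d l))
          * resamplingProb t (c m) b := by
    rw [← Finset.prod_erase_mul Finset.univ _ (Finset.mem_univ m), Function.update_self]
    congr 1
    exact Finset.prod_congr rfl fun l hl => by
      rw [Function.update_of_ne (Finset.ne_of_mem_erase hl)]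
  convert! HasDerivAt.fun_finsetProd (u := Finset.univ) (x := t)
    fun m _ => hasDerivAt_resamplingProb (c m) (d m) t using 1
  rw [resamplingGenerator_apply]
  refine Finset.sum_congr rfl fun m _ => ?_
  simp_rw [prod_update, ← Finset.mul_sum, Finset.sum_sub_distrib, ← Finset.mul_sum,
    sum_resamplingProb, ← Finset.prod_erase_mul Finset.univ _ (Finset.mem_univ m)]
  simp
  field_simp

end ResamplingProb

section Rings

open ProbabilityTheory

lemma expMeasure_Ioi {r t : ℝ} (hr : 0 < r) (ht : 0 ≤ t) :
    expMeasure r (Set.Ioi t) = ENNReal.ofReal (Real.exp (-(r * t))) := by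
  have := isProbabilityMeasure_expMeasure hr
  rw [← Set.compl_Iic, measure_compl measurableSet_Iic (measure_ne_top _ _), measure_univ,
    ← ofReal_cdf, cdf_expMeasure_eq hr, if_pos ht, ← ENNReal.ofReal_one,
    ← ENNReal.ofReal_sub _ (by simp [hr.le, mul_nonneg, ht])]
  congr 1
  ring

variable {ι α : Type*} [MeasurableSpace α]

/-- The law of the time at which a dollar first rings, exponential of rate `1`, together with an
independent uniformly chosen agent that receives the dollar at that time. -/
def ringMeasure (α : Type*) [MeasurableSpace α] : Measure (ℝ × α) :=
  (expMeasure 1).prod (uniformOn Set.univ)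

instance [Finite α] [Nonempty α] [MeasurableSingletonClass α] :
    IsProbabilityMeasure (ringMeasure α) := by
  have := isProbabilityMeasure_expMeasure one_pos
  unfold ringMeasure
  infer_instance

lemma ringMeasure_Ioi_prod {t : ℝ} (ht : 0 ≤ t) (s : Set α) :
    ringMeasure α (Set.Ioi t ×ˢ s) = ENNReal.ofReal (Real.exp (-t)) * uniformOn Set.univ s := by
  rw [ringMeasure, Measure.prod_prod, expMeasure_Ioi one_pos ht, one_mul]

/-- The position at time `t` of a dollar that starts at `a` and whose first ring, with its target,
is `x`. Later rings are ignored: they do not change the law of the position at a fixed time. -/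
def location (t : ℝ) (a : α) (x : ℝ × α) : α := if t < x.1 then a else x.2

/-- The positions at time `t` of dollars with given initial positions and first rings. -/
def locations (t : ℝ) (x : (ι → α) × (ι → ℝ × α)) (m : ι) : α := location t (x.1 m) (x.2 m)

/-- The agents to which the dollars are handed when they first ring. -/
def targets (x : (ι → α) × (ι → ℝ × α)) (m : ι) : α := (x.2 m).2

lemma measurable_locations (t : ℝ) : Measurable (locations t : _ → ι → α) := by
  refine measurable_pi_lambda _ fun m => Measurable.ite (measurableSet_lt ?_ ?_) ?_ ?_ <;> fun_prop

lemma measurable_targets : Measurable (targets : _ → ι → α) := by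
  unfold targets
  fun_prop

/-- Initial positions of law `ν` together with independent first rings of all dollars. -/
def withRings [Fintype ι] (ν : Measure (ι → α)) : Measure ((ι → α) × (ι → ℝ × α)) :=
  ν.prod (Measure.pi fun _ => ringMeasure α)

instance [Fintype ι] [Finite α] [Nonempty α] [MeasurableSingletonClass α] (ν : Measure (ι → α))
    [IsFiniteMeasure ν] : IsFiniteMeasure (withRings ν) := by
  unfold withRings
  infer_instance

instance [Fintype ι] [Finite α] [Nonempty α] [MeasurableSingletonClass α] (ν : Measure (ι → α))
    [IsProbabilityMeasure ν] : IsProbabilityMeasure (withRings ν) := by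
  unfold withRings
  infer_instance

section Law

variable [Fintype α] [DecidableEq α] [Nonempty α] [MeasurableSingletonClass α]

lemma ringMeasure_real_location_eq {t : ℝ} (ht : 0 ≤ t) (a b : α) :
    (ringMeasure α).real {x | location t a x = b} = resamplingProb t a b := by
  have := isProbabilityMeasure_expMeasure one_pos
  have early : (expMeasure 1).real (Set.Ioi t) = Real.exp (-t) := by
    simp [measureReal_def, expMeasure_Ioi one_pos ht, Real.exp_nonneg]
  have uniform : (uniformOn (Set.univ : Set α)).real {b} = (Fintype.card α : ℝ)⁻¹ := by
    simp [measureReal_def, uniformOn_univ]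
  have split : {x | location t a x = b}
      = Set.Ioi t ×ˢ {_u | a = b} ∪ (Set.Ioi t)ᶜ ×ˢ {b} := by
    ext x
    rcases lt_or_ge t x.1 with hx | hx <;> simp [location, hx, hx.not_gt]
  have disjoint : Disjoint (Set.Ioi t ×ˢ {_u : α | a = b}) ((Set.Ioi t)ᶜ ×ˢ {b}) :=
    Set.disjoint_left.mpr fun x hx hx' => hx'.1 hx.1
  rw [split, measureReal_union disjoint (measurableSet_Ioi.compl.prod (.singleton b)), ringMeasure,
    measureReal_prod_prod, measureReal_prod_prod, probReal_compl_eq_one_sub measurableSet_Ioi,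
    early, uniform, resamplingProb]
  split_ifs with h <;> simp [h]

variable [Fintype ι]

lemma pi_ringMeasure_real_locations_eq {t : ℝ} (ht : 0 ≤ t) (c d : ι → α) :
    (Measure.pi fun _ : ι => ringMeasure α).real {ω | locations t (c, ω) = d}
      = ∏ m, resamplingProb t (c m) (d m) := by
  have : {ω | locations t (c, ω) = d} = Set.univ.pi fun m => {x | location t (c m) x = d m} := by
    ext ω
    simp [locations, funext_iff]
  simp_rw [this, measureReal_def, Measure.pi_pi, ENNReal.toReal_prod, ← measureReal_def,
    ringMeasure_real_location_eq ht]

lemma map_locations_real_singleton [DecidableEq ι] (ν : Measure (ι → α)) [IsFiniteMeasure ν]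
    {t : ℝ} (ht : 0 ≤ t) (d : ι → α) :
    ((withRings ν).map (locations t)).real {d}
      = ∑ c, ν.real {c} * ∏ m, resamplingProb t (c m) (d m) := by
  have meas := measurable_locations (ι := ι) (α := α) t
  rw [measureReal_def, Measure.map_apply meas (.singleton d), withRings,
    Measure.prod_apply (meas (.singleton d)), lintegral_fintype, ENNReal.toReal_sum]
  · simp_rw [ENNReal.toReal_mul, ← pi_ringMeasure_real_locations_eq ht, mul_comm (ν.real _)]
    rfl
  · intro c _
    finiteness

end Law

lemma map_locations_zero [Finite α] [Nonempty α] [MeasurableSingletonClass α] [Fintype ι]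
    (ν : Measure (ι → α)) [IsFiniteMeasure ν] : (withRings ν).map (locations 0) = ν := by
  classical
  have := Fintype.ofFinite α
  refine Measure.ext_of_singleton fun d => (measureReal_eq_measureReal_iff).mp ?_
  simp [map_locations_real_singleton, resamplingProb, Fintype.prod_ite_zero, ← funext_iff]

end Rings

section LabelledSolution

variable {ι α : Type*} [Fintype ι] [DecidableEq ι] [Fintype α] [MeasurableSpace α]
  [MeasurableSingletonClass α]

lemma map_occupation_real_singleton [DecidableEq α] (ν : Measure (ι → α)) [IsFiniteMeasure ν]
    (S : α → ℕ) :
    (ν.map occupation).real {S} = ∑ c with occupation c = S, ν.real {c} := by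
  rw [map_measureReal_apply .of_discrete (.singleton S), sum_measureReal_singleton]
  congr 1
  ext c
  simp

lemma hasDerivWithinAt_map_locations [Nonempty α] (ν : Measure (ι → α)) [IsFiniteMeasure ν]
    (d : ι → α) {t : ℝ} (ht : 0 ≤ t) :
    HasDerivWithinAt (fun s => ((withRings ν).map (locations s)).real {d})
      (resamplingGenerator ι α (fun e => ((withRings ν).map (locations t)).real {e}) d)
      (Set.Ici 0) t := by
  classical
  simp_rw [map_locations_real_singleton ν ht]
  have generator_sum : resamplingGenerator ι α (fun e =>
      ∑ c, ν.real {c} * ∏ m, resamplingProb t (c m) (e m)) d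
      = ∑ c, ν.real {c} *
        resamplingGenerator ι α (fun e => ∏ m, resamplingProb t (c m) (e m)) d := by
    have : (fun e => ∑ c, ν.real {c} * ∏ m, resamplingProb t (c m) (e m))
      = ∑ c, ν.real {c} • fun e : ι → α => ∏ m, resamplingProb t (c m) (e m) := by
      ext e
      simp
    simp [this]
  rw [generator_sum]
  exact ((HasDerivAt.fun_sum fun c _ =>
    (hasDerivAt_prod_resamplingProb c d t).const_mul _).hasDerivWithinAt).congr_of_mem
    (fun s hs => map_locations_real_singleton ν hs d) ht

lemma isMasterSolution_map_occupation {N : ℕ} {ν : ℝ → Measure (ι → Fin N)}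
    (hν : ∀ t ∈ Set.Ici (0 : ℝ), IsProbabilityMeasure (ν t))
    (hderiv : ∀ d, ∀ t ∈ Set.Ici (0 : ℝ), HasDerivWithinAt (fun s => (ν s).real {d})
      (resamplingGenerator ι (Fin N) (fun e => (ν t).real {e}) d) (Set.Ici 0) t) :
    IsMasterSolution fun t => (ν t).map occupation := by
  refine ⟨fun t ht => ?_, fun S t ht => ?_⟩
  · have := hν t ht
    exact Measure.isProbabilityMeasure_map Measurable.of_discrete.aemeasurable
  · have point_mass (s : ℝ) (hs : s ∈ Set.Ici (0 : ℝ)) (T : Fin N → ℕ) :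
        ((ν s).map occupation).real {T} = ∑ c with occupation c = T, (ν s).real {c} := by
      have := hν s hs
      exact map_occupation_real_singleton _ _
    simp_rw [masterRHS_eq_masterOperator, point_mass t ht, masterOperator_sum_fiber_occupation]
    exact (HasDerivWithinAt.fun_sum fun c _ => hderiv c t ht).congr_of_mem
      (fun s hs => point_mass s hs S) ht

end LabelledSolution

section Coupling

lemma W1_map_le {Ω : Type*} [MeasurableSpace Ω] {d : ℕ} (ρ : Measure Ω) {X Y : Ω → Fin d → ℕ}
    (hX : Measurable X) (hY : Measurable Y) :
    W1 d (ρ.map X) (ρ.map Y) ≤ ∫⁻ ω, (∑ j, (Nat.dist (X ω j) (Y ω j) : ℝ≥0∞)) / d ∂ρ := by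
  refine (iInf₂_le_of_le (ρ.map fun ω => (X ω, Y ω)) ?_ (iInf_le _ ?_)).trans_eq ?_
  · exact Measure.fst_map_prodMk hY
  · exact Measure.snd_map_prodMk hX
  · exact lintegral_map (by fun_prop) (hX.prodMk hY)

lemma W1_marginal_map_le {Ω : Type*} [MeasurableSpace Ω] {N k : ℕ} (hk : k ≤ N) (ρ : Measure Ω)
    {X Y : Ω → Fin N → ℕ} (hX : Measurable X) (hY : Measurable Y) :
    W1 k (marginal k hk (ρ.map X)) (marginal k hk (ρ.map Y))
      ≤ (∑ j, ∫⁻ ω, (Nat.dist (X ω (Fin.castLE hk j)) (Y ω (Fin.castLE hk j)) : ℝ≥0∞) ∂ρ) / k := by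
  have measurable_dist (j : Fin k) : Measurable fun ω =>
      (Nat.dist (X ω (Fin.castLE hk j)) (Y ω (Fin.castLE hk j)) : ℝ≥0∞) :=
    (Measurable.of_discrete (f := fun S : (Fin N → ℕ) × (Fin N → ℕ) =>
      (Nat.dist (S.1 (Fin.castLE hk j)) (S.2 (Fin.castLE hk j)) : ℝ≥0∞))).comp (hX.prodMk hY)
  rw [marginal, marginal, Measure.map_map (by fun_prop) hX, Measure.map_map (by fun_prop) hY]
  refine (W1_map_le ρ (by fun_prop) (by fun_prop)).trans_eq ?_
  simp_rw [div_eq_mul_inv, Function.comp_apply]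
  rw [lintegral_mul_const _ (by fun_prop), lintegral_finsetSum _ fun j _ => measurable_dist j]

lemma exists_measure_map_eq {X Y : Type*} [MeasurableSpace X] [MeasurableSpace Y]
    [DiscreteMeasurableSpace Y] [Nonempty X] {f : X → Y} (hf : Measurable f) {π : Measure Y}
    (hπ : π (Set.range f)ᶜ = 0) : ∃ ν : Measure X, ν.map f = π := by
  refine ⟨π.map (Function.invFun f), ?_⟩
  rw [Measure.map_map hf .of_discrete]
  conv_rhs => rw [← Measure.map_id (μ := π)]
  refine Measure.map_congr ?_
  filter_upwards [mem_ae_iff.mpr hπ] with y hy using Function.invFun_eq hy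

section Distance

variable {ι α : Type*} [Fintype ι] [DecidableEq α]

lemma dist_occupation_le (c d : ι → α) (a : α) :
    Nat.dist (occupation c a) (occupation d a)
      ≤ #{m | c m = a ∧ d m ≠ a} + #{m | d m = a ∧ c m ≠ a} := by
  have hc := Finset.card_filter_add_card_filter_not (s := {m | c m = a}) fun m => d m = a
  have hd := Finset.card_filter_add_card_filter_not (s := {m | d m = a}) fun m => c m = a
  simp only [Finset.filter_filter] at hc hd
  simp only [occupation, Nat.dist, ← hc, ← hd, and_comm (b := c _ = a), ne_eq,
    and_comm (b := ¬c _ = a)]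
  omega

lemma dist_occupation_locations_le (t : ℝ) (x : (ι → α) × (ι → ℝ × α)) (a : α) :
    Nat.dist (occupation (locations t x) a) (occupation (targets x) a)
      ≤ #{m | x.1 m = a ∧ t < (x.2 m).1} + #{m | t < (x.2 m).1 ∧ (x.2 m).2 = a} := by
  refine (dist_occupation_le _ _ a).trans (Nat.add_le_add ?_ ?_) <;>
  · refine Finset.card_le_card fun m => ?_
    simp only [locations, location, targets, Finset.mem_filter_univ]
    grind

lemma lintegral_card_filter {Ω : Type*} [MeasurableSpace Ω] (ρ : Measure Ω) {p : ι → Ω → Prop}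
    [∀ m ω, Decidable (p m ω)] (hp : ∀ m, MeasurableSet {ω | p m ω}) :
    ∫⁻ ω, (#{m | p m ω} : ℝ≥0∞) ∂ρ = ∑ m, ρ {ω | p m ω} := by
  simp_rw [Finset.card_filter, Nat.cast_sum, Nat.cast_ite, Nat.cast_one, Nat.cast_zero]
  rw [lintegral_finsetSum _ fun m _ => Measurable.ite (hp m) (by fun_prop) (by fun_prop)]
  refine Finset.sum_congr rfl fun m _ => ?_
  simp_rw [← lintegral_indicator_one (hp m), Set.indicator_apply, Set.mem_ofPred_eq, Pi.one_apply]

end Distance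

section Cost

open ProbabilityTheory

variable {ι α : Type*} [Fintype ι] [Nonempty α] [MeasurableSpace α]
  [MeasurableSingletonClass α]

lemma withRings_apply [Finite α] (ν : Measure (ι → α)) [SFinite ν] {t : ℝ}
    (ht : 0 ≤ t) (m : ι) (A : Set (ι → α)) (s : Set α) :
    withRings ν (A ×ˢ (Function.eval m ⁻¹' (Set.Ioi t ×ˢ s)))
      = ν A * (ENNReal.ofReal (Real.exp (-t)) * uniformOn Set.univ s) := by
  rw [withRings, Measure.prod_prod, (measurePreserving_eval _ m).measure_preimage
    (measurableSet_Ioi.prod .of_discrete).nullMeasurableSet, ringMeasure_Ioi_prod ht]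

lemma lintegral_dist_occupation_le [Fintype α] [DecidableEq α] (ν : Measure (ι → α))
    [IsProbabilityMeasure ν] {t : ℝ} (ht : 0 ≤ t) (a : α) :
    ∫⁻ x, (Nat.dist (occupation (locations t x) a) (occupation (targets x) a) : ℝ≥0∞)
        ∂withRings ν
      ≤ (∫⁻ c, (occupation c a : ℝ≥0∞) ∂ν + Fintype.card ι / Fintype.card α)
        * ENNReal.ofReal (Real.exp (-t)) := by
  have start (m : ι) : {x : (ι → α) × (ι → ℝ × α) | x.1 m = a ∧ t < (x.2 m).1}
      = {c | c m = a} ×ˢ (Function.eval m ⁻¹' (Set.Ioi t ×ˢ Set.univ)) := by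
    ext x
    simp
  have target (m : ι) : {x : (ι → α) × (ι → ℝ × α) | t < (x.2 m).1 ∧ (x.2 m).2 = a}
      = Set.univ ×ˢ (Function.eval m ⁻¹' (Set.Ioi t ×ˢ {a})) := by
    ext x
    simp
  have measurableSet_box (m : ι) (A : Set (ι → α)) (s : Set α) :
      MeasurableSet (A ×ˢ (Function.eval m ⁻¹' (Set.Ioi t ×ˢ s)) : Set (_ × (ι → ℝ × α))) :=
    .prod .of_discrete (measurable_pi_apply m (measurableSet_Ioi.prod .of_discrete))
  have measurableSet_start (m : ι) := (start m).symm ▸ measurableSet_box m _ _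
  have measurableSet_target (m : ι) := (target m).symm ▸ measurableSet_box m _ _
  have measurable_card_start : Measurable fun x : (ι → α) × (ι → ℝ × α) =>
      (#{m | x.1 m = a ∧ t < (x.2 m).1} : ℝ≥0∞) := by
    simp_rw [Finset.card_filter, Nat.cast_sum]
    exact Finset.measurable_sum _ fun m _ =>
      (measurable_of_countable _).comp (.ite (measurableSet_start m) (by fun_prop) (by fun_prop))
  calc _ ≤ ∫⁻ x : (ι → α) × (ι → ℝ × α), (#{m | x.1 m = a ∧ t < (x.2 m).1} : ℝ≥0∞)
          + #{m | t < (x.2 m).1 ∧ (x.2 m).2 = a} ∂withRings ν :=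
        lintegral_mono fun x =>
          (Nat.cast_le.mpr (dist_occupation_locations_le t x a)).trans_eq (Nat.cast_add _ _)
    _ = ∑ m, ν {c | c m = a} * ENNReal.ofReal (Real.exp (-t))
          + ∑ _m : ι, ENNReal.ofReal (Real.exp (-t)) / Fintype.card α := by
        rw [lintegral_add_left measurable_card_start, lintegral_card_filter _ measurableSet_start,
          lintegral_card_filter _ measurableSet_target]
        simp only [start, target, withRings_apply ν ht, uniformOn_univ,
          measure_univ, one_mul, mul_one, Measure.count_singleton, mul_one_div]
    _ = _ := by
        simp only [occupation]
        rw [lintegral_card_filter ν fun _ => .of_discrete, add_mul, Finset.sum_mul,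
          Finset.sum_const, Finset.card_univ, nsmul_eq_mul, ← mul_div_assoc,
          ENNReal.mul_div_right_comm]

lemma W1_marginal_locations_le {N k : ℕ} [NeZero N] (hk : k ≤ N) (ν : Measure (ι → Fin N))
    [IsProbabilityMeasure ν] {t : ℝ} (ht : 0 ≤ t) :
    W1 k (marginal k hk ((withRings ν).map fun x => occupation (locations t x)))
        (marginal k hk ((withRings ν).map fun x => occupation (targets x)))
      ≤ (∑ j : Fin k, (∫⁻ S, (S (Fin.castLE hk j) : ℝ≥0∞) ∂ν.map occupation
        + Fintype.card ι / N) * ENNReal.ofReal (Real.exp (-t))) / k := by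
  have measurable_occupation : Measurable (occupation : (ι → Fin N) → _) := .of_discrete
  refine (W1_marginal_map_le hk _ (measurable_occupation.comp (measurable_locations t))
    (measurable_occupation.comp measurable_targets)).trans ?_
  gcongr with j
  refine (lintegral_dist_occupation_le ν ht _).trans_eq ?_
  rw [Fintype.card_fin, lintegral_map .of_discrete .of_discrete]

end Cost

section Multinomial

open ProbabilityTheory

lemma map_occupation_uniformOn {ι : Type*} [Fintype ι] {N μ : ℕ} [NeZero N]
    (hι : Fintype.card ι = N * μ) :
    (uniformOn Set.univ : Measure (ι → Fin N)).map occupation = MNmeas N μ := by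
  classical
  refine Measure.ext_of_singleton fun S => ?_
  have fiber : (occupation : (ι → Fin N) → _) ⁻¹' {S}
      = (↑({c | occupation c = S} : Finset (ι → Fin N)) : Set (ι → Fin N)) := by
    ext c
    simp
  rw [Measure.map_apply .of_discrete (.singleton S), uniformOn_univ, fiber,
    Measure.count_apply_finset, MNmeas, Measure.sum_smul_dirac_singleton, Fintype.card_fun,
    Fintype.card_fin, hι]
  split_ifs with hS
  · have factorial_eq := Nat.multinomial_spec Finset.univ S
    have prod_pos : (0 : ℝ) < (∏ i, (S i).factorial : ℕ) := mod_cast Finset.prod_pos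
      fun i _ => (S i).factorial_pos
    have pow_pos : (0 : ℝ) < (N : ℝ) ^ (N * μ) := mod_cast Nat.pow_pos (Nat.pos_of_neZero N)
    rw [hS] at factorial_eq
    rw [card_occupation_eq (hS.trans hι.symm), ← factorial_eq, Nat.cast_mul,
      mul_div_mul_left _ _ prod_pos.ne', ENNReal.ofReal_div_of_pos pow_pos, Nat.cast_pow,
      ENNReal.ofReal_pow (Nat.cast_nonneg N), ENNReal.ofReal_natCast, ENNReal.ofReal_natCast]
  · have fiber_empty : #{c : ι → Fin N | occupation c = S} = 0 :=
      Finset.card_eq_zero.mpr (Finset.filter_eq_empty_iff.mpr fun c _ hc =>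
        hS (by rw [← hc, sum_occupation, hι]))
    rw [fiber_empty, Nat.cast_zero, ENNReal.zero_div]

lemma map_targets {ι α : Type*} [Fintype ι] [Finite α] [Nonempty α] [MeasurableSpace α]
    [MeasurableSingletonClass α] (ν : Measure (ι → α)) [IsProbabilityMeasure ν] :
    (withRings ν).map targets = uniformOn Set.univ := by
  have := isProbabilityMeasure_expMeasure one_pos
  rw [← Set.pi_univ Set.univ, uniformOn_pi]
  exact ((measurePreserving_pi _ _ fun _ => measurePreserving_snd).comp
    measurePreserving_snd).map_eq

lemma map_occupation_targets {ι : Type*} [Fintype ι] {N μ : ℕ} [NeZero N]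
    (hι : Fintype.card ι = N * μ) (ν : Measure (ι → Fin N)) [IsProbabilityMeasure ν] :
    (withRings ν).map (fun x => occupation (targets x)) = MNmeas N μ := by
  rw [← map_occupation_uniformOn hι, ← map_targets ν,
    Measure.map_map .of_discrete measurable_targets]
  rfl

end Multinomial

end Coupling

lemma natCast_mul_div_cancel_left (n m : ℕ) [NeZero n] : ((n * m : ℕ) : ℝ≥0∞) / n = m := by
  rw [Nat.cast_mul, mul_comm, ENNReal.mul_div_cancel_right (NeZero.ne _) (ENNReal.natCast_ne_top n)]

lemma lintegral_eq_div_of_exchangeable {α : Type*} [Fintype α] [Nonempty α]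
    {π : Measure (α → ℕ)} [IsProbabilityMeasure π] {n : ℕ} (hπ : π {S | ∑ a, S a = n}ᶜ = 0)
    (hexch : ∀ σ : Equiv.Perm α, π.map (fun S => S ∘ σ) = π) (a : α) :
    ∫⁻ S, (S a : ℝ≥0∞) ∂π = n / Fintype.card α := by
  classical
  have eq_mean (b : α) : ∫⁻ S, (S b : ℝ≥0∞) ∂π = ∫⁻ S, (S a : ℝ≥0∞) ∂π := by
    conv_lhs => rw [← hexch (Equiv.swap a b), lintegral_map (by fun_prop) (by fun_prop)]
    simp
  have sum_mean : ∑ b, ∫⁻ S, (S b : ℝ≥0∞) ∂π = n := by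
    rw [← lintegral_finsetSum _ fun b _ => by fun_prop]
    calc ∫⁻ S, ∑ b, (S b : ℝ≥0∞) ∂π = ∫⁻ _, (n : ℝ≥0∞) ∂π := by
          refine lintegral_congr_ae ?_
          filter_upwards [mem_ae_iff.mpr hπ] with S hS
          exact_mod_cast congrArg (Nat.cast : ℕ → ℝ≥0∞) hS
      _ = n := by simp
  rw [ENNReal.eq_div_iff (by simp) (by simp), ← sum_mean, Finset.sum_congr rfl fun b _ => eq_mean b,
    Finset.sum_const, Finset.card_univ, nsmul_eq_mul]

lemma IsMasterSolution.eq_map_occupation_locations {ι : Type*} [Fintype ι] {N : ℕ} [NeZero N]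
    {P : ℝ → Measure (Fin N → ℕ)} (hP : IsMasterSolution P) {ν : Measure (ι → Fin N)}
    (hν : ν.map occupation = P 0) {t : ℝ} (ht : 0 ≤ t) :
    P t = (withRings ν).map (fun x => occupation (locations t x)) := by
  classical
  have : IsProbabilityMeasure (ν.map occupation) := hν ▸ hP.1 0 Set.self_mem_Ici
  have : IsProbabilityMeasure ν := ν.isProbabilityMeasure_of_map occupation
  have solution := isMasterSolution_map_occupation
    (ν := fun s => (withRings ν).map (locations s))
    (fun s _ => Measure.isProbabilityMeasure_map (measurable_locations s).aemeasurable)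
    fun d s hs => hasDerivWithinAt_map_locations ν d hs
  have := hP.eq_of_zero_eq solution (by simp only [map_locations_zero, hν]) ht
  rw [this, Measure.map_map .of_discrete (measurable_locations t)]
  rfl

theorem convergence_to_multinomial_marginals_general (N μ k : ℕ) (hk1 : 1 ≤ k) (hk : k ≤ N)
    (P : ℝ → Measure (Fin N → ℕ)) (hP : IsMasterSolution P)
    (hP0 : P 0 ({S : Fin N → ℕ | ∑ i, S i = N * μ}ᶜ) = 0) :
    ∀ t ∈ Set.Ici (0 : ℝ),
      W1 k (marginal k hk (P t)) (marginal k hk (MNmeas N μ))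
        ≤ ((∑ j : Fin k, ∫⁻ S, (S (Fin.castLE hk j) : ℝ≥0∞) ∂P 0) / k + μ)
          * ENNReal.ofReal (Real.exp (-t)) := by
  intro t ht
  have : NeZero k := ⟨by omega⟩
  have : NeZero N := ⟨by omega⟩
  have card_eq : Fintype.card (Fin (N * μ)) = N * μ := Fintype.card_fin _
  obtain ⟨ν, hν⟩ : ∃ ν : Measure (Fin (N * μ) → Fin N), ν.map occupation = P 0 :=
    exists_measure_map_eq .of_discrete <| measure_mono_null
      (Set.compl_subset_compl.mpr fun S hS => mem_range_occupation (hS.trans card_eq.symm)) hP0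
  have : IsProbabilityMeasure (ν.map occupation) := hν ▸ hP.1 0 Set.self_mem_Ici
  have : IsProbabilityMeasure ν := ν.isProbabilityMeasure_of_map occupation
  rw [hP.eq_map_occupation_locations hν ht, ← map_occupation_targets card_eq ν]
  refine (W1_marginal_locations_le hk ν ht).trans_eq ?_
  rw [hν, card_eq, natCast_mul_div_cancel_left, ← Finset.sum_mul, Finset.sum_add_distrib,
    Finset.sum_const, Finset.card_fin, nsmul_eq_mul, ← Nat.cast_mul, ENNReal.mul_div_right_comm,
    ENNReal.add_div, natCast_mul_div_cancel_left]

/-- Equilibration of the `k`-particle marginals towards those of the multinomial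
distribution: if `P_0` is supported on `𝒜_{N,μ}` and exchangeable, then
`W₁(π_k(P_t), M_{N,k}) ≤ 2 μ e^{-t}`. -/
theorem convergence_to_multinomial_marginals (N μ k : ℕ) (hN : 2 ≤ N) (hμ : 1 ≤ μ)
    (hk1 : 1 ≤ k) (hk : k ≤ N)
    (P : ℝ → Measure (Fin N → ℕ)) (hP : IsMasterSolution P)
    (hP0 : P 0 ({S : Fin N → ℕ | ∑ i, S i = N * μ}ᶜ) = 0)
    (hexch : ∀ σ : Equiv.Perm (Fin N), (P 0).map (fun S => S ∘ σ) = P 0) :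
    ∀ t ∈ Set.Ici (0 : ℝ),
      W1 k (marginal k hk (P t)) (marginal k hk (MNmeas N μ))
        ≤ ENNReal.ofReal (2 * μ * Real.exp (-t)) := by
  intro t ht
  have := hP.1 0 Set.self_mem_Ici
  have : NeZero k := ⟨by omega⟩
  have : NeZero N := ⟨by omega⟩
  have mean (i : Fin N) : ∫⁻ S, (S i : ℝ≥0∞) ∂P 0 = μ := by
    rw [lintegral_eq_div_of_exchangeable hP0 hexch, Fintype.card_fin, natCast_mul_div_cancel_left]
  refine (convergence_to_multinomial_marginals_general N μ k hk1 hk P hP hP0 t ht).trans_eq ?_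
  simp_rw [mean]
  rw [Finset.sum_const, Finset.card_fin, nsmul_eq_mul, ← Nat.cast_mul, natCast_mul_div_cancel_left,
    ← two_mul, ENNReal.ofReal_mul (by positivity), ENNReal.ofReal_mul zero_le_two]
  simp

end
end
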